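/- Let A, B, C be nonempty pairwise disjoint sets forming a partition of M ⊆ V. Then the table 𝔛_M is strictly collapsible over A into 𝔛_{B∪C} with respect to λ_{B'}^M, λ_{C'}^M and λ_{B'∪C'}^M for every nonempty B' ⊆ B and nonempty C' ⊆ C, if and only if X_A ⟂ (X_B, X_C), i.e., p_M(x) = p_A(x_A)·p_{B∪C}(x_{B∪C}) for all x ∈ 𝔛_M. -/

import Mathlib

open Finset

variable {V : Type*} [Fintype V] [DecidableEq V]
variable {𝔛 : V → Type*} [∀ v, Fintype (𝔛 v)] [∀ v, DecidableEq (𝔛 v)]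
  [∀ v, Nonempty (𝔛 v)]

/-- The marginal `p_A` of a distribution `p` on the full table, evaluated at the
`A`-coordinates of `x`. -/
noncomputable def margin (p : (∀ v, 𝔛 v) → ℝ) (A : Finset V) (x : ∀ v, 𝔛 v) : ℝ :=
  ∑ y ∈ Finset.univ.filter (fun y : ∀ v, 𝔛 v => ∀ v ∈ A, y v = x v), p y

/-- `ν_L^M(x_L) = (1/|𝔛_{M∖L}|) Σ_{j ∈ 𝔛_M : j_L = x_L} log p_M(j)`, written with sums over
full configurations (for `L ⊆ M` the extra coordinates cancel against the normalization). -/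
noncomputable def nu (p : (∀ v, 𝔛 v) → ℝ) (L M : Finset V) (x : ∀ v, 𝔛 v) : ℝ :=
  (∏ v ∈ Lᶜ, (Fintype.card (𝔛 v) : ℝ))⁻¹ *
    ∑ j ∈ Finset.univ.filter (fun j : ∀ v, 𝔛 v => ∀ v ∈ L, j v = x v),
      Real.log (margin p M j)

/-- The marginal log-linear parameter `λ_L^M(x_L) = Σ_{L' ⊆ L} (−1)^{|L∖L'|} ν_{L'}^M(x_{L'})`. -/
noncomputable def mll (p : (∀ v, 𝔛 v) → ℝ) (L M : Finset V) (x : ∀ v, 𝔛 v) : ℝ :=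
  ∑ L' ∈ L.powerset, (-1 : ℝ) ^ ((L \ L').card) * nu p L' M x

/-- `𝔛_N` is strictly collapsible over `N ∖ M'` into `𝔛_{M'}` with respect to `λ_L^N`:
`λ_L^{M'} = λ_L^N` and `λ_Z^N = 0` for every `Z ⊆ N` with `L ⊊ Z` meeting `N ∖ M'`. -/
def StrictlyCollapsible (p : (∀ v, 𝔛 v) → ℝ) (N M' L : Finset V) : Prop :=
  (∀ x : ∀ v, 𝔛 v, mll p L M' x = mll p L N x) ∧
  (∀ Z ⊆ N, L ⊂ Z → (Z ∩ (N \ M')).Nonempty → ∀ x : ∀ v, 𝔛 v, mll p Z N x = 0)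

/-!
Averaging a function `f` over the coordinates outside `L`, for every `L`, and Möbius inverting in
`L` splits `f` into interactions indexed by sets of coordinates. Since `f` is the sum of all its
interactions, it depends only on the coordinates in `A` exactly when the interactions of all sets
not contained in `A` vanish.

The parameters `λ_L^M` are the interactions of `log p_M`; they vanish for `L ⊄ M`. Put `S = B ∪ C`.
Strict collapsibility over `A` with respect to all nonempty `L ⊆ S` therefore says that `log p_M`
and `log p_S` have the same interactions for every `Z ⊄ A`, that is, that `log p_M - log p_S`
depends only on the coordinates in `A`. Then `p_M = g · p_S` with `g` a function of `x_A`, and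
summing over the coordinates in `S` identifies `g` with `p_A`.
-/

theorem forall_nonempty_subset_union_iff {ι : Type*} [DecidableEq ι] {B C : Finset ι}
    {P : Finset ι → Prop} :
    (∀ L ⊆ B ∪ C, L.Nonempty → P L) ↔
      (∀ B' ⊆ B, B'.Nonempty → P B') ∧ (∀ C' ⊆ C, C'.Nonempty → P C') ∧
        ∀ B' ⊆ B, B'.Nonempty → ∀ C' ⊆ C, C'.Nonempty → P (B' ∪ C') := by
  constructor
  · intro h
    exact ⟨fun B' hB ↦ h B' (hB.trans subset_union_left),
      fun C' hC ↦ h C' (hC.trans subset_union_right),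
      fun B' hB hne C' hC _ ↦ h _ (union_subset_union hB hC) (hne.mono subset_union_left)⟩
  · rintro ⟨hB, hC, hBC⟩ L hL hne
    have hsplit : L ∩ B ∪ L ∩ C = L := by rw [← inter_union_distrib_left, inter_eq_left.2 hL]
    obtain hLB | hLB := (L ∩ B).eq_empty_or_nonempty
    · rw [hLB, empty_union] at hsplit
      exact hC L (inter_eq_left.1 hsplit) hne
    obtain hLC | hLC := (L ∩ C).eq_empty_or_nonempty
    · rw [hLC, union_empty] at hsplit
      exact hB L (inter_eq_left.1 hsplit) hne
    exact hsplit ▸ hBC _ inter_subset_right hLB _ inter_subset_right hLC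

section MoebiusTransform

variable {ι G : Type*} [DecidableEq ι] [AddCommGroup G]

/-- The Möbius transform of a function of finite sets: the function whose sum over the subsets of
`L` is `g L`. -/
def moebiusTransform (g : Finset ι → G) (L : Finset ι) : G :=
  ∑ T ∈ L.powerset, (-1 : ℤ) ^ #(L \ T) • g T

theorem moebiusTransform_sub (g h : Finset ι → G) :
    moebiusTransform (g - h) = moebiusTransform g - moebiusTransform h := by
  ext L
  simp only [moebiusTransform, Pi.sub_apply, smul_sub, sum_sub_distrib]

theorem moebiusTransform_insert (g : Finset ι → G) {a : ι} {L : Finset ι} (ha : a ∉ L) :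
    moebiusTransform g (insert a L) =
      moebiusTransform (fun T ↦ g (insert a T)) L - moebiusTransform g L := by
  simp only [moebiusTransform]
  rw [sum_powerset_insert ha, add_comm, sub_eq_add_neg, ← sum_neg_distrib]
  congr 1 <;> refine sum_congr rfl fun T hT ↦ ?_
  · rw [insert_sdiff_insert, sdiff_insert_of_notMem ha]
  · have haT : a ∉ T := fun h ↦ ha (mem_powerset.1 hT h)
    rw [insert_sdiff_of_notMem _ haT, card_insert_of_notMem (by simp [ha]), pow_succ,
      mul_neg_one, neg_smul]

theorem sum_powerset_moebiusTransform (g : Finset ι → G) (M : Finset ι) :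
    ∑ L ∈ M.powerset, moebiusTransform g L = g M := by
  induction M using Finset.induction_on generalizing g with
  | empty => simp [moebiusTransform]
  | insert a M ha ih =>
    have hinsert : ∀ L ∈ M.powerset, moebiusTransform g (insert a L) =
        moebiusTransform (fun T ↦ g (insert a T)) L - moebiusTransform g L :=
      fun L hL ↦ moebiusTransform_insert g fun h ↦ ha (mem_powerset.1 hL h)
    rw [sum_powerset_insert ha, sum_congr rfl hinsert, sum_sub_distrib, ih, ih,
      add_sub_cancel]

theorem moebiusTransform_eq_zero {g : Finset ι → G} {a : ι} {L : Finset ι} (ha : a ∈ L)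
    (hg : ∀ T, g (insert a T) = g T) : moebiusTransform g L = 0 := by
  rw [← insert_erase ha, moebiusTransform_insert g (notMem_erase a L)]
  simp only [hg, sub_self]

end MoebiusTransform

section Interaction

open scoped BigOperators

variable {ι : Type*} [Fintype ι] [DecidableEq ι] {π : ι → Type*} [∀ i, Fintype (π i)]
variable {E : Type*} [AddCommGroup E] [Module ℚ≥0 E]

/-- The mean of `f` over the coordinates outside `L`, as a function of those in `L`. The mean is
taken over full configurations `y`, whose coordinates in `L` are then overwritten by those of
`x`. -/
def partialMean (f : (∀ i, π i) → E) (L : Finset ι) (x : ∀ i, π i) : E :=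
  𝔼 y, f (L.piecewise x y)

theorem partialMean_sub (f g : (∀ i, π i) → E) :
    partialMean (f - g) = partialMean f - partialMean g := by
  ext L x
  simp only [partialMean, Pi.sub_apply, expect_sub_distrib]

theorem partialMean_univ (f : (∀ i, π i) → E) : partialMean f univ = f := by
  ext x
  simp only [partialMean, piecewise_univ]
  exact expect_const ⟨x, mem_univ x⟩ _

theorem dependsOn_partialMean (f : (∀ i, π i) → E) (L : Finset ι) :
    DependsOn (partialMean f L) L := fun _ _ h ↦
  expect_congr rfl fun _ _ ↦ congrArg f (L.piecewise_congr h fun _ _ ↦ rfl)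

theorem partialMean_insert_of_dependsOn {f : (∀ i, π i) → E} {S : Set ι} (hf : DependsOn f S)
    {a : ι} (ha : a ∉ S) (L : Finset ι) : partialMean f (insert a L) = partialMean f L := by
  ext x
  refine expect_congr rfl fun y _ ↦ hf fun i hi ↦ ?_
  exact L.piecewise_insert_of_ne _ _ (ne_of_mem_of_not_mem hi ha)

/-- The `L`-interaction of `f` in the decomposition of `f` into main effects and interactions. -/
def interaction (f : (∀ i, π i) → E) (L : Finset ι) : (∀ i, π i) → E :=
  moebiusTransform (partialMean f) L

theorem interaction_sub (f g : (∀ i, π i) → E) (L : Finset ι) :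
    interaction (f - g) L = interaction f L - interaction g L := by
  simp only [interaction, partialMean_sub, moebiusTransform_sub, Pi.sub_apply]

theorem sum_powerset_interaction (f : (∀ i, π i) → E) (M : Finset ι) :
    ∑ L ∈ M.powerset, interaction f L = partialMean f M :=
  sum_powerset_moebiusTransform (partialMean f) M

theorem dependsOn_iff_interaction_eq_zero {f : (∀ i, π i) → E} {A : Finset ι} :
    DependsOn f A ↔ ∀ L, ¬ L ⊆ A → interaction f L = 0 := by
  constructor
  · intro hf L hLA
    obtain ⟨a, haL, haA⟩ := not_subset.1 hLA
    exact moebiusTransform_eq_zero haL (partialMean_insert_of_dependsOn hf haA)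
  · intro h
    have hmean : partialMean f A = f := calc
      partialMean f A = ∑ L ∈ A.powerset, interaction f L := (sum_powerset_interaction f A).symm
      _ = ∑ L ∈ univ.powerset, interaction f L :=
        sum_subset (powerset_mono.2 A.subset_univ) fun L _ hL ↦ h L (mt mem_powerset.2 hL)
      _ = partialMean f univ := sum_powerset_interaction f univ
      _ = f := partialMean_univ f
    exact hmean ▸ dependsOn_partialMean f A

end Interaction

section Margin

omit [∀ v, Nonempty (𝔛 v)]

variable {p : (∀ v, 𝔛 v) → ℝ} {A L M S T : Finset V}

/-- The configurations that agree with `x` on `L`, that is, the cell `x_L` of the marginal table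
`𝔛_L` seen as a set of cells of the full table. -/
def cell (L : Finset V) (x : ∀ v, 𝔛 v) : Finset (∀ v, 𝔛 v) :=
  {y | ∀ v ∈ L, y v = x v}

theorem mem_cell {x y : ∀ v, 𝔛 v} : y ∈ cell L x ↔ ∀ v ∈ L, y v = x v :=
  mem_filter_univ y

theorem cell_congr {x y : ∀ v, 𝔛 v} (h : ∀ v ∈ L, x v = y v) : cell L x = cell L y := by
  ext j
  simp only [mem_cell]
  exact forall₂_congr fun v hv ↦ by rw [h v hv]

theorem card_cell (L : Finset V) (x : ∀ v, 𝔛 v) :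
    #(cell L x) = ∏ v ∈ Lᶜ, Fintype.card (𝔛 v) := by
  have hpi : cell L x = Fintype.piFinset fun v ↦ if v ∈ L then {x v} else univ := by
    ext y
    simp only [mem_cell, Fintype.mem_piFinset]
    refine forall_congr' fun v ↦ ?_
    by_cases hv : v ∈ L <;> simp [hv]
  rw [hpi, Fintype.card_piFinset, ← prod_mul_prod_compl L,
    prod_eq_one fun v hv ↦ by rw [if_pos hv, card_singleton], one_mul]
  exact prod_congr rfl fun v hv ↦ by rw [if_neg (mem_compl.1 hv), card_univ]

theorem eq_piecewise_iff {j x y : ∀ v, 𝔛 v} :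
    j = L.piecewise x y ↔ j ∈ cell L x ∧ y ∈ cell Lᶜ j := by
  simp only [mem_cell, mem_compl, funext_iff, piecewise]
  grind

theorem sum_piecewise_eq_card_mul_sum_cell (f : (∀ v, 𝔛 v) → ℝ) (L : Finset V) (x : ∀ v, 𝔛 v) :
    ∑ y, f (L.piecewise x y) = (∏ v ∈ L, (Fintype.card (𝔛 v) : ℝ)) * ∑ j ∈ cell L x, f j := calc
  ∑ y, f (L.piecewise x y) = ∑ y, ∑ j ∈ {L.piecewise x y}, f j := by simp only [sum_singleton]
  _ = ∑ j ∈ cell L x, ∑ _y ∈ cell Lᶜ j, f j := sum_comm' fun y j ↦ by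
    simp only [mem_univ, mem_singleton, true_and, eq_piecewise_iff, and_comm]
  _ = (∏ v ∈ L, (Fintype.card (𝔛 v) : ℝ)) * ∑ j ∈ cell L x, f j := by
    simp only [sum_const, card_cell, compl_compl, nsmul_eq_mul, Nat.cast_prod, mul_sum]

theorem nu_eq_partialMean (p : (∀ v, 𝔛 v) → ℝ) (L M : Finset V) (x : ∀ v, 𝔛 v) :
    nu p L M x = partialMean (Real.log ∘ margin p M) L x := by
  have hcard : ∀ v, (Fintype.card (𝔛 v) : ℝ) ≠ 0 := fun v ↦
    Nat.cast_ne_zero.2 (Fintype.card_pos_iff.2 ⟨x v⟩).ne'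
  have hL : ∏ v ∈ L, (Fintype.card (𝔛 v) : ℝ) ≠ 0 := prod_ne_zero_iff.2 fun v _ ↦ hcard v
  rw [partialMean, Fintype.expect_eq_sum_div_card,
    sum_piecewise_eq_card_mul_sum_cell (Real.log ∘ margin p M), Fintype.card_pi, Nat.cast_prod,
    ← prod_mul_prod_compl L, mul_div_mul_left _ _ hL, div_eq_inv_mul]
  rfl

theorem mll_eq_interaction (p : (∀ v, 𝔛 v) → ℝ) (L M : Finset V) :
    mll p L M = interaction (Real.log ∘ margin p M) L := by
  ext x
  simp [mll, interaction, moebiusTransform, nu_eq_partialMean]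

theorem dependsOn_margin (p : (∀ v, 𝔛 v) → ℝ) (A : Finset V) : DependsOn (margin p A) A :=
  fun _ _ h ↦ congrArg (∑ y ∈ ·, p y) (cell_congr h)

theorem margin_pos (hp : ∀ x, 0 < p x) (A : Finset V) (x : ∀ v, 𝔛 v) : 0 < margin p A x :=
  sum_pos (fun y _ ↦ hp y) ⟨x, mem_cell.2 fun _ _ ↦ rfl⟩

theorem margin_empty (p : (∀ v, 𝔛 v) → ℝ) (x : ∀ v, 𝔛 v) : margin p ∅ x = ∑ y, p y := by
  simp [margin]

theorem sum_cell_compl_margin (p : (∀ v, 𝔛 v) → ℝ) (hST : S ⊆ T) (x : ∀ v, 𝔛 v) :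
    ∑ j ∈ cell Sᶜ x, margin p T j = margin p (T \ S) x := calc
  ∑ j ∈ cell Sᶜ x, margin p T j = ∑ y ∈ cell (T \ S) x, ∑ _j ∈ {S.piecewise y x}, p y :=
    sum_comm' fun j y ↦ by
      change j ∈ cell Sᶜ x ∧ y ∈ cell T j ↔ _
      simp only [mem_singleton, eq_piecewise_iff, mem_cell, mem_compl, mem_sdiff]
      grind
  _ = margin p (T \ S) x := sum_congr rfl fun _ _ ↦ sum_singleton _ _

theorem margin_eq_of_margin_union_eq_mul (hsum : ∑ x, p x = 1) (hAS : Disjoint A S)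
    {g : (∀ v, 𝔛 v) → ℝ} (hg : DependsOn g A)
    (h : ∀ x, margin p (A ∪ S) x = g x * margin p S x) : margin p A = g := by
  ext x
  have hgx : ∀ j ∈ cell Sᶜ x, g j = g x := fun j hj ↦
    hg fun v hv ↦ mem_cell.1 hj v (mem_compl.2 (disjoint_left.1 hAS hv))
  calc
    margin p A x = margin p ((A ∪ S) \ S) x := by rw [union_sdiff_cancel_right hAS]
    _ = ∑ j ∈ cell Sᶜ x, margin p (A ∪ S) j :=
      (sum_cell_compl_margin p subset_union_right x).symm
    _ = ∑ j ∈ cell Sᶜ x, g x * margin p S j :=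
      sum_congr rfl fun j hj ↦ by rw [h j, hgx j hj]
    _ = g x * margin p (S \ S) x := by
      rw [← mul_sum, sum_cell_compl_margin p Subset.rfl]
    _ = g x := by rw [sdiff_self, bot_eq_empty, margin_empty, hsum, mul_one]

theorem dependsOn_log_margin_sub_log_margin_iff (hp : ∀ x, 0 < p x) (hsum : ∑ x, p x = 1)
    (hAS : Disjoint A S) :
    DependsOn (Real.log ∘ margin p (A ∪ S) - Real.log ∘ margin p S) A ↔
      ∀ x, margin p (A ∪ S) x = margin p A x * margin p S x := by
  constructor
  · intro hdep
    have hratio : DependsOn (fun x ↦ margin p (A ∪ S) x / margin p S x) A := fun x y hxy ↦ by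
      apply Real.log_injOn_pos (div_pos (margin_pos hp _ x) (margin_pos hp _ x))
        (div_pos (margin_pos hp _ y) (margin_pos hp _ y))
      simpa only [Pi.sub_apply, Function.comp_apply,
        Real.log_div (margin_pos hp _ _).ne' (margin_pos hp _ _).ne'] using hdep hxy
    have hmul : ∀ x, margin p (A ∪ S) x = margin p (A ∪ S) x / margin p S x * margin p S x :=
      fun x ↦ (div_mul_cancel₀ _ (margin_pos hp S x).ne').symm
    rwa [margin_eq_of_margin_union_eq_mul hsum hAS hratio hmul]
  · intro h x y hxy
    simp only [Pi.sub_apply, Function.comp_apply, h,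
      Real.log_mul (margin_pos hp _ _).ne' (margin_pos hp _ _).ne', add_sub_cancel_right,
      dependsOn_margin p A hxy]

theorem mll_eq_zero_of_not_subset (p : (∀ v, 𝔛 v) → ℝ) (hLM : ¬ L ⊆ M) : mll p L M = 0 := by
  have hdep : DependsOn (Real.log ∘ margin p M) M := fun _ _ h ↦
    congrArg Real.log (dependsOn_margin p M h)
  rw [mll_eq_interaction, dependsOn_iff_interaction_eq_zero.1 hdep L hLM]

theorem forall_strictlyCollapsible_iff_mll_eq (p : (∀ v, 𝔛 v) → ℝ) (hAS : Disjoint A S) :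
    (∀ L ⊆ S, L.Nonempty → StrictlyCollapsible p (A ∪ S) S L) ↔
      ∀ Z, ¬ Z ⊆ A → mll p Z (A ∪ S) = mll p Z S := by
  constructor
  · intro h Z hZA
    by_cases hZM : Z ⊆ A ∪ S
    swap
    · rw [mll_eq_zero_of_not_subset p hZM,
        mll_eq_zero_of_not_subset p fun hZS ↦ hZM (hZS.trans subset_union_right)]
    have hZS : (Z ∩ S).Nonempty := by
      obtain ⟨a, haZ, haA⟩ := not_subset.1 hZA
      exact ⟨a, mem_inter.2 ⟨haZ, (mem_union.1 (hZM haZ)).resolve_left haA⟩⟩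
    obtain ⟨hcollapse, hvanish⟩ := h (Z ∩ S) inter_subset_right hZS
    by_cases hZsub : Z ⊆ S
    · rw [inter_eq_left.2 hZsub] at hcollapse
      exact (funext hcollapse).symm
    · obtain ⟨b, hbZ, hbS⟩ := not_subset.1 hZsub
      rw [mll_eq_zero_of_not_subset p hZsub]
      refine funext (hvanish Z hZM ?_ ⟨b, by grind⟩)
      exact inter_subset_left.ssubset_of_ne fun heq ↦ hZsub (inter_eq_left.1 heq)
  · rintro h L hLS ⟨a, haL⟩
    have hnot : ∀ Z, L ⊆ Z → ¬ Z ⊆ A := fun Z hLZ hZA ↦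
      disjoint_left.1 hAS (hZA (hLZ haL)) (hLS haL)
    refine ⟨fun x ↦ congrFun (h L (hnot L Subset.rfl)).symm x, fun Z _ hLZ ⟨b, hb⟩ x ↦ ?_⟩
    have hZS : ¬ Z ⊆ S := not_subset.2 ⟨b, by grind⟩
    rw [h Z (hnot Z hLZ.subset), mll_eq_zero_of_not_subset p hZS, Pi.zero_apply]

theorem forall_strictlyCollapsible_iff_margin_eq_mul (hp : ∀ x, 0 < p x) (hsum : ∑ x, p x = 1)
    (hAS : Disjoint A S) :
    (∀ L ⊆ S, L.Nonempty → StrictlyCollapsible p (A ∪ S) S L) ↔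
      ∀ x, margin p (A ∪ S) x = margin p A x * margin p S x := by
  rw [forall_strictlyCollapsible_iff_mll_eq p hAS,
    ← dependsOn_log_margin_sub_log_margin_iff hp hsum hAS, dependsOn_iff_interaction_eq_zero]
  simp only [interaction_sub, sub_eq_zero, mll_eq_interaction]

end Margin

theorem stmt13 (p : (∀ v, 𝔛 v) → ℝ) (hp : ∀ x, 0 < p x) (hsum : ∑ x, p x = 1)
    (A B C M : Finset V) (hA : A.Nonempty) (hB : B.Nonempty) (hC : C.Nonempty)
    (hAB : Disjoint A B) (hAC : Disjoint A C) (hBC : Disjoint B C)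
    (hM : M = A ∪ B ∪ C) :
    ((∀ B' ⊆ B, B'.Nonempty → StrictlyCollapsible p M (B ∪ C) B') ∧
     (∀ C' ⊆ C, C'.Nonempty → StrictlyCollapsible p M (B ∪ C) C') ∧
     (∀ B' ⊆ B, B'.Nonempty → ∀ C' ⊆ C, C'.Nonempty →
       StrictlyCollapsible p M (B ∪ C) (B' ∪ C'))) ↔
    (∀ x : ∀ v, 𝔛 v, margin p M x = margin p A x * margin p (B ∪ C) x) := by
  rw [hM, union_assoc, ← forall_nonempty_subset_union_iff]
  exact forall_strictlyCollapsible_iff_margin_eq_mul hp hsum (disjoint_union_right.2 ⟨hAB, hAC⟩)
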